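/- Let U ⊆ ℝⁿ be open, let u : ℝⁿ → ℝⁿ be a C¹ vector field (not assumed divergence-free), let Pe and μ be real constants, and let φ, φ† : ℝⁿ → ℝ be C² functions satisfying on U the direct eigenvalue equation div(Pe u φ − ∇φ) = μ φ and the modified adjoint eigenvalue equation div( −Pe u φ† − ∇φ† ) + Pe (div u) φ† = μ φ†. Then the modified drift field Pe v* := Pe u φ φ† + φ ∇φ† − φ† ∇φ is divergence-free on U: div( Pe u φ φ† + φ ∇φ† − φ† ∇φ ) = 0 at every point of U. (This is the extension of the divergence-free property of v* to non-solenoidal velocities, e.g. u = v + μ v_Λ arising from a Smoluchowski potential drift, Section 4.2.) -/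

import Mathlib

/-- Gradient of a scalar field on `ℝⁿ` (components w.r.t. the standard basis). -/
noncomputable def vgrad {n : ℕ} (f : (Fin n → ℝ) → ℝ) (x : Fin n → ℝ) : Fin n → ℝ :=
  fun i => fderiv ℝ f x (Pi.single i 1)

/-- Divergence of a vector field on `ℝⁿ`: `∑ i, ∂ᵢ Fᵢ`. -/
noncomputable def vdiv {n : ℕ} (F : (Fin n → ℝ) → (Fin n → ℝ)) (x : Fin n → ℝ) : ℝ :=
  ∑ i, fderiv ℝ (fun y => F y i) x (Pi.single i 1)

/-!
The modified drift is `φ† J + φ ∇φ†`, where `J = Pe u φ - ∇φ` is the flux of the direct problem.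
When its divergence is expanded the terms `∇φ · ∇φ†` cancel, which leaves
`φ† div J + φ (Δφ† + Pe u · ∇φ†)`. The extra term `Pe (div u) φ†` is exactly what puts the adjoint
operator in the non-conservative form `-Δφ† - Pe u · ∇φ†`, so the divergence of the drift is `φ†`
times the direct operator on `φ` minus `φ` times the adjoint operator on `φ†`; for a common
eigenvalue the two cancel.
-/

section VectorCalculus

variable {n : ℕ} {f : (Fin n → ℝ) → ℝ} {F G : (Fin n → ℝ) → Fin n → ℝ} {x : Fin n → ℝ}

lemma vdiv_add (hF : DifferentiableAt ℝ F x) (hG : DifferentiableAt ℝ G x) :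
    vdiv (F + G) x = vdiv F x + vdiv G x := by
  rw [differentiableAt_pi] at hF hG
  simp only [vdiv, Pi.add_apply, fderiv_fun_add (hF _) (hG _), add_apply,
    Finset.sum_add_distrib]

lemma vdiv_sub (hF : DifferentiableAt ℝ F x) (hG : DifferentiableAt ℝ G x) :
    vdiv (F - G) x = vdiv F x - vdiv G x := by
  rw [differentiableAt_pi] at hF hG
  simp only [vdiv, Pi.sub_apply, fderiv_fun_sub (hF _) (hG _), sub_apply,
    Finset.sum_sub_distrib]

lemma vdiv_const_smul (c : ℝ) (F : (Fin n → ℝ) → Fin n → ℝ) (x : Fin n → ℝ) :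
    vdiv (c • F) x = c * vdiv F x := by
  have hcomponent (i : Fin n) :
      fderiv ℝ (fun y => (c • F) y i) x = c • fderiv ℝ (fun y => F y i) x :=
    congrFun (fderiv_const_smul_field c) x
  simp only [vdiv, hcomponent, smul_apply, smul_eq_mul, Finset.mul_sum]

lemma vdiv_smul (hf : DifferentiableAt ℝ f x) (hF : DifferentiableAt ℝ F x) :
    vdiv (f • F) x = f x * vdiv F x + vgrad f x ⬝ᵥ F x := by
  rw [differentiableAt_pi] at hF
  simp only [vdiv, vgrad, dotProduct, Pi.smul_apply', Pi.smul_apply, smul_eq_mul,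
    fderiv_fun_mul hf (hF _), add_apply, smul_apply, Finset.sum_add_distrib, Finset.mul_sum,
    mul_comm (F x _)]

lemma differentiable_vgrad_of_contDiff (hf : ContDiff ℝ 2 f) : Differentiable ℝ (vgrad f) := by
  have hfderiv : Differentiable ℝ (fderiv ℝ f) :=
    (hf.fderiv_right (m := 1) (by norm_num)).differentiable one_ne_zero
  exact differentiable_pi.2 fun i => hfderiv.clm_apply (differentiable_const _)

end VectorCalculus

section AdvectionDiffusion

variable {n : ℕ}

/-- The advection-diffusion flux `Pe u f - ∇f`, whose divergence is the operator `L f`. The flux of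
the adjoint problem is the one with Péclet number `-Pe`. -/
noncomputable def advectionDiffusionFlux (Pe : ℝ) (u : (Fin n → ℝ) → Fin n → ℝ)
    (f : (Fin n → ℝ) → ℝ) : (Fin n → ℝ) → Fin n → ℝ :=
  fun y i => Pe * u y i * f y - vgrad f y i

/-- The modified drift `Pe v* = Pe u f g + f ∇g - g ∇f` of a direct mode `f` and an adjoint
mode `g`. -/
noncomputable def modifiedDrift (Pe : ℝ) (u : (Fin n → ℝ) → Fin n → ℝ)
    (f g : (Fin n → ℝ) → ℝ) : (Fin n → ℝ) → Fin n → ℝ :=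
  fun y i => Pe * u y i * (f y * g y) + f y * vgrad g y i - g y * vgrad f y i

variable {u : (Fin n → ℝ) → Fin n → ℝ} {f g : (Fin n → ℝ) → ℝ} {x : Fin n → ℝ}

lemma advectionDiffusionFlux_eq_smul_sub (Pe : ℝ) (u : (Fin n → ℝ) → Fin n → ℝ)
    (f : (Fin n → ℝ) → ℝ) :
    advectionDiffusionFlux Pe u f = f • (Pe • u) - vgrad f := by
  ext y i
  simp only [advectionDiffusionFlux, Pi.sub_apply, Pi.smul_apply', Pi.smul_apply, smul_eq_mul]
  ring

lemma modifiedDrift_eq_smul_flux_add_smul_vgrad (Pe : ℝ) (u : (Fin n → ℝ) → Fin n → ℝ)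
    (f g : (Fin n → ℝ) → ℝ) :
    modifiedDrift Pe u f g = g • advectionDiffusionFlux Pe u f + f • vgrad g := by
  ext y i
  simp only [modifiedDrift, advectionDiffusionFlux, Pi.add_apply, Pi.smul_apply', Pi.smul_apply,
    smul_eq_mul]
  ring

lemma differentiableAt_advectionDiffusionFlux (Pe : ℝ) (hu : DifferentiableAt ℝ u x)
    (hf : DifferentiableAt ℝ f x) (hf' : DifferentiableAt ℝ (vgrad f) x) :
    DifferentiableAt ℝ (advectionDiffusionFlux Pe u f) x := by
  rw [advectionDiffusionFlux_eq_smul_sub]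
  exact (hf.smul (hu.const_smul Pe)).sub hf'

lemma vdiv_advectionDiffusionFlux (Pe : ℝ) (hu : DifferentiableAt ℝ u x)
    (hf : DifferentiableAt ℝ f x) (hf' : DifferentiableAt ℝ (vgrad f) x) :
    vdiv (advectionDiffusionFlux Pe u f) x =
      Pe * vdiv u x * f x + Pe * (vgrad f x ⬝ᵥ u x) - vdiv (vgrad f) x := by
  rw [advectionDiffusionFlux_eq_smul_sub, vdiv_sub (hf.smul (hu.const_smul Pe)) hf',
    vdiv_smul hf (hu.const_smul Pe), vdiv_const_smul, Pi.smul_apply, dotProduct_smul,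
    smul_eq_mul]
  ring

lemma vdiv_advectionDiffusionFlux_neg_add (Pe : ℝ) (hu : DifferentiableAt ℝ u x)
    (hf : DifferentiableAt ℝ f x) (hf' : DifferentiableAt ℝ (vgrad f) x) :
    vdiv (advectionDiffusionFlux (-Pe) u f) x + Pe * vdiv u x * f x =
      -vdiv (vgrad f) x - Pe * (vgrad f x ⬝ᵥ u x) := by
  rw [vdiv_advectionDiffusionFlux (-Pe) hu hf hf']
  ring

lemma dotProduct_advectionDiffusionFlux (Pe : ℝ) (u : (Fin n → ℝ) → Fin n → ℝ)
    (f : (Fin n → ℝ) → ℝ) (w x : Fin n → ℝ) :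
    w ⬝ᵥ advectionDiffusionFlux Pe u f x = Pe * f x * (w ⬝ᵥ u x) - w ⬝ᵥ vgrad f x := by
  rw [advectionDiffusionFlux_eq_smul_sub, Pi.sub_apply, dotProduct_sub, Pi.smul_apply',
    dotProduct_smul, Pi.smul_apply, dotProduct_smul, smul_eq_mul, smul_eq_mul]
  ring

lemma vdiv_modifiedDrift (Pe : ℝ) (hu : DifferentiableAt ℝ u x)
    (hf : DifferentiableAt ℝ f x) (hf' : DifferentiableAt ℝ (vgrad f) x)
    (hg : DifferentiableAt ℝ g x) (hg' : DifferentiableAt ℝ (vgrad g) x) :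
    vdiv (modifiedDrift Pe u f g) x =
      g x * vdiv (advectionDiffusionFlux Pe u f) x
        - f x * (vdiv (advectionDiffusionFlux (-Pe) u g) x + Pe * vdiv u x * g x) := by
  have hJ := differentiableAt_advectionDiffusionFlux Pe hu hf hf'
  calc vdiv (modifiedDrift Pe u f g) x
      = (g x * vdiv (advectionDiffusionFlux Pe u f) x
            + vgrad g x ⬝ᵥ advectionDiffusionFlux Pe u f x)
          + (f x * vdiv (vgrad g) x + vgrad f x ⬝ᵥ vgrad g x) := by
        rw [modifiedDrift_eq_smul_flux_add_smul_vgrad, vdiv_add (hg.smul hJ) (hf.smul hg'),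
          vdiv_smul hg hJ, vdiv_smul hf hg']
    _ = g x * vdiv (advectionDiffusionFlux Pe u f) x
          - f x * (-vdiv (vgrad g) x - Pe * (vgrad g x ⬝ᵥ u x)) := by
        rw [dotProduct_advectionDiffusionFlux, dotProduct_comm (vgrad f x)]
        ring
    _ = g x * vdiv (advectionDiffusionFlux Pe u f) x
          - f x * (vdiv (advectionDiffusionFlux (-Pe) u g) x + Pe * vdiv u x * g x) := by
        rw [vdiv_advectionDiffusionFlux_neg_add Pe hu hg hg']

theorem modified_drift_divergence_free_nonsolenoidal_general {Pe μ : ℝ}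
    (hu : DifferentiableAt ℝ u x)
    (hf : DifferentiableAt ℝ f x) (hf' : DifferentiableAt ℝ (vgrad f) x)
    (hg : DifferentiableAt ℝ g x) (hg' : DifferentiableAt ℝ (vgrad g) x)
    (hdirect : vdiv (advectionDiffusionFlux Pe u f) x = μ * f x)
    (hadj : vdiv (advectionDiffusionFlux (-Pe) u g) x + Pe * vdiv u x * g x = μ * g x) :
    vdiv (modifiedDrift Pe u f g) x = 0 := by
  rw [vdiv_modifiedDrift Pe hu hf hf' hg hg', hdirect, hadj]
  ring

end AdvectionDiffusion

/-- Extension of the divergence-free property of the modified drift `Pe v*` to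
non-solenoidal velocities `u` (e.g. `u = v + μ v_Λ` from a Smoluchowski potential
drift, Section 4.2), using the modified adjoint eigenproblem with the extra term
`Pe (div u) φ†`. -/
theorem modified_drift_divergence_free_nonsolenoidal {n : ℕ}
    (U : Set (Fin n → ℝ)) (hU : IsOpen U)
    (u : (Fin n → ℝ) → (Fin n → ℝ)) (hu : ContDiff ℝ 1 u)
    (Pe μ : ℝ) (φ φd : (Fin n → ℝ) → ℝ)
    (hφ : ContDiff ℝ 2 φ) (hφd : ContDiff ℝ 2 φd)
    (hdirect : ∀ x ∈ U,
      vdiv (fun y i => Pe * u y i * φ y - vgrad φ y i) x = μ * φ x)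
    (hadj : ∀ x ∈ U,
      vdiv (fun y i => -(Pe * u y i * φd y) - vgrad φd y i) x
        + Pe * vdiv u x * φd x = μ * φd x) :
    ∀ x ∈ U,
      vdiv (fun y i =>
        Pe * u y i * (φ y * φd y) + φ y * vgrad φd y i - φd y * vgrad φ y i) x = 0 := by
  simp only [← neg_mul] at hadj
  exact fun x hx => modified_drift_divergence_free_nonsolenoidal_general
    (hu.differentiable one_ne_zero x)
    (hφ.differentiable two_ne_zero x) (differentiable_vgrad_of_contDiff hφ x)
    (hφd.differentiable two_ne_zero x) (differentiable_vgrad_of_contDiff hφd x)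
    (hdirect x hx) (hadj x hx)
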